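/- Let Q be a Weyl candidate on Minkowski space V with electric part 𝓔(Q) and magnetic part 𝓑(Q) with respect to a unit timelike vector n, let h be the spatial metric and ε the spatial volume form. Let v ∈ V, set 𝒜 := η(n,v) and let v⊥ := v + η(n,v)n be its spatial part. Define the symmetric bilinear form T(y,w) := Q(v,y,v,w). Then the orthogonal splitting parts of T are: 𝔯(T) := T(n,n) = 𝓔(Q)(v⊥,v⊥); the spatial covector part satisfies 𝔧(T)_μ = −ε_{μκπ} 𝓑(Q)_{λ}^{ π} v⊥^{λ} v⊥^{κ} − 𝒜 𝓔(Q)_{μλ} v⊥^{λ}; and the spatial symmetric part satisfies 𝔱(T)_{μν} = v⊥^{κ}( −2 v⊥_{(ν} 𝓔(Q)_{μ)κ} + h_{μν} 𝓔(Q)_{κπ} v⊥^{π} + 2𝒜 𝓑(Q)_{(μ}^{ π} ε_{ν)κπ} ) + 𝓔(Q)_{μν}( v⊥_{κ} v⊥^{κ} + 𝒜² ), where round brackets denote symmetrization with weight ½. -/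

import Mathlib

noncomputable section

/-- Minkowski space `V = ℝ⁴`. -/
abbrev V4 : Type := Fin 4 → ℝ

/-- The Minkowski bilinear form of signature `(-,+,+,+)`. -/
def η (x y : V4) : ℝ := -(x 0 * y 0) + x 1 * y 1 + x 2 * y 2 + x 3 * y 3

/-- The standard basis of `V4`. -/
def e4 (a : Fin 4) : V4 := Pi.single a 1

/-- Components of the Minkowski metric `diag(-1,1,1,1)` (its own inverse). -/
def ηm (a b : Fin 4) : ℝ := if a = b then (if a = (0 : Fin 4) then -1 else 1) else 0

/-- A 4-linear form on `V4`, given by its components in the standard basis. -/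
abbrev T4 : Type := Fin 4 → Fin 4 → Fin 4 → Fin 4 → ℝ

/-- A bilinear form on `V4`, given by its components in the standard basis. -/
abbrev T2 : Type := Fin 4 → Fin 4 → ℝ

/-- Evaluation of a 4-linear form (given by components) on vectors. -/
def eval4 (W : T4) (x y z w : V4) : ℝ :=
  ∑ a : Fin 4, ∑ b : Fin 4, ∑ c : Fin 4, ∑ d : Fin 4, W a b c d * x a * y b * z c * w d

/-- The alternating volume 4-form with `vol(e₀,e₁,e₂,e₃) = 1`. -/
def volv (x y z w : V4) : ℝ := Matrix.det (Matrix.of ![x, y, z, w])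

/-- Components `η_{αβγδ}` of the volume form. -/
def volc (a b c d : Fin 4) : ℝ := volv (e4 a) (e4 b) (e4 c) (e4 d)

/-- Left dual `(*W)_{μνλρ} = ½ η_{μν}{}^{αβ} W_{αβλρ}`. -/
def leftDual (W : T4) : T4 := fun μ ν lam ρ =>
  (1/2) * ∑ γ : Fin 4, ∑ δ : Fin 4, ∑ a : Fin 4, ∑ b : Fin 4,
    volc μ ν γ δ * ηm γ a * ηm δ b * W a b lam ρ

/-- Right dual `(W*)_{μνλρ} = ½ W_{μν}{}^{αβ} η_{αβλρ}`. -/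
def rightDual (W : T4) : T4 := fun μ ν lam ρ =>
  (1/2) * ∑ γ : Fin 4, ∑ δ : Fin 4, ∑ a : Fin 4, ∑ b : Fin 4,
    W μ ν a b * ηm a γ * ηm b δ * volc γ δ lam ρ

/-- A Weyl candidate: pair antisymmetries, pair exchange, first Bianchi, trace-free. -/
def IsWeyl (W : T4) : Prop :=
  (∀ x y z w : V4, eval4 W x y z w = - eval4 W y x z w) ∧
  (∀ x y z w : V4, eval4 W x y z w = - eval4 W x y w z) ∧
  (∀ x y z w : V4, eval4 W x y z w = eval4 W z w x y) ∧
  (∀ x y z w : V4, eval4 W x y z w + eval4 W x z w y + eval4 W x w y z = 0) ∧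
  (∀ x y : V4, ∑ a : Fin 4, ∑ b : Fin 4, ηm a b * eval4 W (e4 a) x (e4 b) y = 0)

/-- Electric part `E(W)_{ab} = W(e_a, n, e_b, n)`. -/
def Epart (W : T4) (n : V4) : T2 := fun a b => eval4 W (e4 a) n (e4 b) n

/-- Magnetic part `B(W)_{ab} = (W*)(e_a, n, e_b, n)`. -/
def Bpart (W : T4) (n : V4) : T2 := fun a b => eval4 (rightDual W) (e4 a) n (e4 b) n

/-- Raise both indices of a bilinear form's components. -/
def up2 (S : T2) : T2 := fun a b => ∑ c : Fin 4, ∑ d : Fin 4, ηm a c * ηm b d * S c d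

/-- Full contraction `S_{ab} T^{ab}`. -/
def contr2 (S T : T2) : ℝ := ∑ a : Fin 4, ∑ b : Fin 4, S a b * up2 T a b

/-!
For a 2-form `F` in four dimensions, wedging with a covector is Hodge dual to contracting with it:
`F*(cross x y z, u) = η(u,x) F(y,z) + η(u,y) F(z,x) + η(u,z) F(x,y)`, and the same with `(F*, -F)`
in place of `(F, F*)`. Applied to the last pair of a Weyl candidate `Q`, the second form of this
identity turns the trace condition on `Q` into the first Bianchi identity for `Q*`. Hence `Q*` has
pair symmetry, and the first form of the identity turns the Bianchi identity for `Q*` into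
`η ∧ Q = 0`. Evaluating `η ∧ Q` on a unit timelike `n` and vectors orthogonal to it expresses the
spatial components of `Q` by its electric part; evaluating the first form at `u = x = n` expresses
the components with a single `n` by the magnetic part. It remains to expand `Q(v, ·, v, ·)` along
`v = v⊥ - 𝒜 n`.
-/

/-- Evaluation of a bilinear form (given by components) on vectors. -/
def eval2 (F : T2) (x y : V4) : ℝ := ∑ a : Fin 4, ∑ b : Fin 4, F a b * x a * y b

/-- The Hodge dual `(F*)_{λρ} = ½ F^{αβ} η_{αβλρ}` of a 2-form given by its components, with the
convention of `rightDual`. -/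
def hodge2 (F : T2) : T2 := fun lam ρ =>
  (1/2) * ∑ γ : Fin 4, ∑ δ : Fin 4, ∑ a : Fin 4, ∑ b : Fin 4,
    F a b * ηm a γ * ηm b δ * volc γ δ lam ρ

/-- The Minkowski vector product of three vectors, characterized by
`η (cross x y z) w = volv x y z w`. -/
def cross (x y z : V4) : V4 := fun q => ∑ p : Fin 4, volv x y z (e4 p) * ηm p q

/-- The orthogonal projection onto the complement of `n`, for unit timelike `n`. -/
def spatialProj (n x : V4) : V4 := x + η n x • n

/-- `eval4` as an iterated linear map. -/
def eval4Lin (W : T4) : V4 →ₗ[ℝ] V4 →ₗ[ℝ] V4 →ₗ[ℝ] V4 →ₗ[ℝ] ℝ :=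
  ∑ a, ∑ b, ∑ c, ∑ d, (LinearMap.proj a).smulRight
    ((LinearMap.proj b).smulRight ((LinearMap.proj c).smulRight (W a b c d • LinearMap.proj d)))

theorem eval4Lin_apply (W : T4) (x y z w : V4) : eval4Lin W x y z w = eval4 W x y z w := by
  simp only [eval4Lin, eval4, LinearMap.sum_apply, LinearMap.smulRight_apply, LinearMap.smul_apply,
    LinearMap.proj_apply, smul_eq_mul]
  refine Finset.sum_congr rfl fun _ _ => Finset.sum_congr rfl fun _ _ =>
    Finset.sum_congr rfl fun _ _ => Finset.sum_congr rfl fun _ _ => ?_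
  ring

theorem eval4_add_smul_first (W : T4) (x u y z w : V4) (c : ℝ) :
    eval4 W (x + c • u) y z w = eval4 W x y z w + c * eval4 W u y z w := by
  simp [← eval4Lin_apply]

theorem eval4_add_smul_third (W : T4) (x u y z w : V4) (c : ℝ) :
    eval4 W x y (z + c • u) w = eval4 W x y z w + c * eval4 W x y u w := by
  simp [← eval4Lin_apply]

theorem eval4_add_smul_fourth (W : T4) (x u y z w : V4) (c : ℝ) :
    eval4 W x y z (w + c • u) = eval4 W x y z w + c * eval4 W x y z u := by
  simp [← eval4Lin_apply]

theorem e4_apply (a b : Fin 4) : e4 a b = if b = a then 1 else 0 := by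
  simp [e4, Pi.single_apply]

theorem ηm_comm (a b : Fin 4) : ηm a b = ηm b a := by
  unfold ηm
  grind

theorem sum_ηm_mul (x : V4) (a : Fin 4) : ∑ b, ηm a b * x b = η x (e4 a) := by
  fin_cases a <;> simp [η, ηm, e4_apply]

theorem sum_ηm_mul_η (x : V4) (b : Fin 4) : ∑ a, ηm a b * η (e4 a) x = x b := by
  fin_cases b <;> simp [η, ηm, e4_apply]

theorem η_comm (x y : V4) : η x y = η y x := by
  simp only [η]
  ring

theorem η_add_smul (x y u : V4) (c : ℝ) : η x (y + c • u) = η x y + c * η x u := by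
  simp only [η, Pi.add_apply, Pi.smul_apply, smul_eq_mul]
  ring

theorem η_basis (a b : Fin 4) : η (e4 a) (e4 b) = ηm a b := by
  fin_cases a <;> fin_cases b <;> simp [η, ηm, e4_apply]

theorem sum_η_basis_mul (x y : V4) : ∑ a, η x (e4 a) * y a = η x y := by
  simp [η, e4_apply, Fin.sum_univ_four]

theorem spatialProj_of_orthogonal {n x : V4} (hx : η n x = 0) : spatialProj n x = x := by
  rw [spatialProj, hx, zero_smul, add_zero]

theorem η_spatialProj {n : V4} (hn : η n n = -1) (x : V4) : η n (spatialProj n x) = 0 := by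
  rw [spatialProj, η_add_smul, hn]
  ring

theorem η_spatialProj_right {n x : V4} (hx : η n x = 0) (y : V4) :
    η x (spatialProj n y) = η x y := by
  rw [spatialProj, η_add_smul, η_comm x n, hx, mul_zero, add_zero]

theorem η_spatialProj_spatialProj {n : V4} (hn : η n n = -1) (x y : V4) :
    η (spatialProj n x) (spatialProj n y) = η x y + η n x * η n y := by
  rw [η_spatialProj_right (η_spatialProj hn x), η_comm, spatialProj, η_add_smul, η_comm y x,
    η_comm y n]

theorem sum_smul_e4 (x : V4) : ∑ a, x a • e4 a = x := by
  ext b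
  simp [e4_apply]

theorem eval4_basis (W : T4) (a b c d : Fin 4) :
    eval4 W (e4 a) (e4 b) (e4 c) (e4 d) = W a b c d := by
  simp [eval4, e4_apply]

theorem sum_mul_eval4_second (W : T4) (x y z w : V4) :
    ∑ b, y b * eval4 W x (e4 b) z w = eval4 W x y z w := by
  conv_rhs => rw [← sum_smul_e4 y]
  simp [← eval4Lin_apply]

theorem sum_eval4_mul_first (W : T4) (x y z w : V4) :
    ∑ a, eval4 W (e4 a) y z w * x a = eval4 W x y z w := by
  conv_rhs => rw [← sum_smul_e4 x]
  simp [← eval4Lin_apply, mul_comm]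

theorem sum_eval4_mul_third (W : T4) (x y z w : V4) :
    ∑ c, eval4 W x y (e4 c) w * z c = eval4 W x y z w := by
  conv_rhs => rw [← sum_smul_e4 z]
  simp [← eval4Lin_apply, mul_comm]

theorem sum_Epart_mul (W : T4) (n z : V4) (a : Fin 4) :
    ∑ c, Epart W n a c * z c = eval4 W (e4 a) n z n :=
  sum_eval4_mul_third W _ _ _ _

theorem sum_Bpart_mul (W : T4) (n z : V4) (a : Fin 4) :
    ∑ c, Bpart W n a c * z c = eval4 (rightDual W) (e4 a) n z n :=
  sum_eval4_mul_third (rightDual W) _ _ _ _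

theorem eval2_Bpart (W : T4) (n x z : V4) :
    eval2 (Bpart W n) x z = eval4 (rightDual W) x n z n := by
  simp only [← sum_eval4_mul_first _ x, ← sum_Bpart_mul, eval2, Finset.sum_mul, mul_right_comm]

theorem eval4_swap_left {W : T4} (hW : ∀ a b c d, W a b c d = -W b a c d) (x y z w : V4) :
    eval4 W x y z w = -eval4 W y x z w := by
  simp only [eval4, ← Finset.sum_neg_distrib]
  rw [Finset.sum_comm]
  refine Finset.sum_congr rfl fun a _ => Finset.sum_congr rfl fun b _ =>
    Finset.sum_congr rfl fun c _ => Finset.sum_congr rfl fun d _ => ?_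
  rw [hW b a c d]
  ring

theorem eval4_swap_right {W : T4} (hW : ∀ a b c d, W a b c d = -W a b d c) (x y z w : V4) :
    eval4 W x y z w = -eval4 W x y w z := by
  simp only [eval4, ← Finset.sum_neg_distrib]
  refine Finset.sum_congr rfl fun a _ => Finset.sum_congr rfl fun b _ => ?_
  rw [Finset.sum_comm]
  refine Finset.sum_congr rfl fun d _ => Finset.sum_congr rfl fun c _ => ?_
  rw [hW a b c d]
  ring

theorem eval4_eq_sum_eval2 (W : T4) (x y z w : V4) :
    eval4 W x y z w = ∑ a, ∑ b, eval2 (W a b) z w * (x a * y b) := by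
  simp only [eval4, eval2, Finset.sum_mul]
  refine Finset.sum_congr rfl fun _ _ => Finset.sum_congr rfl fun _ _ =>
    Finset.sum_congr rfl fun _ _ => Finset.sum_congr rfl fun _ _ => ?_
  ring

theorem volv_eq (x y z w : V4) : volv x y z w =
    (x 0 * y 1 - x 1 * y 0) * (z 2 * w 3 - z 3 * w 2)
    - (x 0 * y 2 - x 2 * y 0) * (z 1 * w 3 - z 3 * w 1)
    + (x 0 * y 3 - x 3 * y 0) * (z 1 * w 2 - z 2 * w 1)
    + (x 1 * y 2 - x 2 * y 1) * (z 0 * w 3 - z 3 * w 0)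
    - (x 1 * y 3 - x 3 * y 1) * (z 0 * w 2 - z 2 * w 0)
    + (x 2 * y 3 - x 3 * y 2) * (z 0 * w 1 - z 1 * w 0) := by
  simp [volv, Matrix.det_succ_row_zero, Fin.sum_univ_succ, Fin.succAbove]
  ring

theorem sum_volv_third (x y u w : V4) : ∑ κ, volv x y (e4 κ) w * u κ = volv x y u w := by
  simp [volv_eq, e4_apply, Fin.sum_univ_four]
  ring

theorem hodge2_swap (F : T2) (c d : Fin 4) : hodge2 F c d = -hodge2 F d c := by
  have volc_swap : ∀ γ δ, volc γ δ c d = -volc γ δ d c := fun γ δ => by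
    simp only [volc, volv_eq]; ring
  simp only [hodge2, volc_swap _ _, mul_neg, Finset.sum_neg_distrib]

theorem hodge2_eq {F : T2} (hF : ∀ a b, F a b = -F b a) : hodge2 F =
    ![![0, F 2 3, -F 1 3, F 1 2], ![-F 2 3, 0, -F 0 3, F 0 2],
      ![F 1 3, F 0 3, 0, -F 0 1], ![-F 1 2, -F 0 2, F 0 1, 0]] := by
  ext c d
  fin_cases c <;> fin_cases d <;>
    simp [hodge2, ηm, volc, volv_eq, Fin.sum_univ_four, e4_apply] <;>
    linarith [hF 1 0, hF 2 0, hF 3 0, hF 2 1, hF 3 1, hF 3 2]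

theorem cross_eq (x y z : V4) : cross x y z =
    ![-volv x y z (e4 0), volv x y z (e4 1), volv x y z (e4 2), volv x y z (e4 3)] := by
  ext q
  fin_cases q <;> simp [cross, ηm]

theorem eval2_hodge2_cross {F : T2} (hF : ∀ a b, F a b = -F b a) (x y z u : V4) :
    eval2 (hodge2 F) (cross x y z) u =
      η u x * eval2 F y z + η u y * eval2 F z x + η u z * eval2 F x y := by
  have hF_self : ∀ a, F a a = 0 := fun a => by linarith [hF a a]
  simp [hodge2_eq hF, cross_eq, volv_eq, eval2, η, Fin.sum_univ_four, hF_self, e4_apply, hF 1 0,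
    hF 2 0, hF 3 0, hF 2 1, hF 3 1, hF 3 2]
  ring

theorem hodge2_hodge2 {F : T2} (hF : ∀ a b, F a b = -F b a) : hodge2 (hodge2 F) = -F := by
  have hF_self : ∀ a, F a a = 0 := fun a => by linarith [hF a a]
  rw [hodge2_eq (hodge2_swap F), hodge2_eq hF]
  ext c d
  fin_cases c <;> fin_cases d <;> simp [hF_self] <;>
    linarith [hF 1 0, hF 2 0, hF 3 0, hF 2 1, hF 3 1, hF 3 2]

theorem pair_symm_of_bianchi {α M : Type*} [AddCommGroup M] [IsAddTorsionFree M]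
    {K : α → α → α → α → M}
    (swap_left : ∀ x y z w, K x y z w = -K y x z w)
    (swap_right : ∀ x y z w, K x y z w = -K x y w z)
    (bianchi : ∀ x y z w, K x y z w + K x z w y + K x w y z = 0) (x y z w : α) :
    K x y z w = K z w x y := by
  -- Milnor's octahedron: modulo the swaps, `hx - hy - hz + hw` reads
  -- `2 • K x y z w - 2 • K z w x y = 0`.
  have hx := bianchi x y z w
  have hy := bianchi y z w x
  have hz := bianchi z w x y
  have hw := bianchi w x y z
  grind

theorem eval4_rightDual_swap_right (W : T4) (x y z w : V4) :
    eval4 (rightDual W) x y z w = -eval4 (rightDual W) x y w z :=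
  eval4_swap_right (fun _ _ => hodge2_swap _) x y z w

section Duality

variable {W : T4} (hW : ∀ a b c d, W a b c d = -W a b d c)
include hW

theorem eval4_rightDual_cross (a b x y z u : V4) :
    eval4 (rightDual W) a b (cross x y z) u =
      η u x * eval4 W a b y z + η u y * eval4 W a b z x + η u z * eval4 W a b x y := by
  have rightDual_apply : ∀ i j, rightDual W i j = hodge2 (W i j) := fun _ _ => rfl
  simp only [eval4_eq_sum_eval2, rightDual_apply, eval2_hodge2_cross (hW _ _), Finset.mul_sum,
    ← Finset.sum_add_distrib]
  refine Finset.sum_congr rfl fun _ _ => Finset.sum_congr rfl fun _ _ => ?_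
  ring

theorem rightDual_rightDual : rightDual (rightDual W) = -W := by
  funext a b
  exact hodge2_hodge2 (hW a b)

theorem eval4_cross (a b x y z u : V4) :
    eval4 W a b (cross x y z) u =
      -(η u x * eval4 (rightDual W) a b y z + η u y * eval4 (rightDual W) a b z x
        + η u z * eval4 (rightDual W) a b x y) := by
  have hW' : ∀ i j k l, rightDual W i j k l = -rightDual W i j l k := fun _ _ => hodge2_swap _
  rw [← eval4_rightDual_cross hW', rightDual_rightDual hW]
  simp [eval4]

end Duality

namespace IsWeyl

variable {Q : T4} (hQ : IsWeyl Q)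
include hQ

theorem swap_left (x y z w : V4) : eval4 Q x y z w = -eval4 Q y x z w := hQ.1 x y z w

theorem swap_right (x y z w : V4) : eval4 Q x y z w = -eval4 Q x y w z := hQ.2.1 x y z w

theorem pair_symm (x y z w : V4) : eval4 Q x y z w = eval4 Q z w x y := hQ.2.2.1 x y z w

theorem self_left (x z w : V4) : eval4 Q x x z w = 0 := by
  linarith [hQ.swap_left x x z w]

theorem self_right (x y z : V4) : eval4 Q x y z z = 0 := by
  linarith [hQ.swap_right x y z z]

theorem apply_swap_left (a b c d : Fin 4) : Q a b c d = -Q b a c d := by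
  simpa only [eval4_basis] using hQ.swap_left (e4 a) (e4 b) (e4 c) (e4 d)

theorem apply_swap_right (a b c d : Fin 4) : Q a b c d = -Q a b d c := by
  simpa only [eval4_basis] using hQ.swap_right (e4 a) (e4 b) (e4 c) (e4 d)

theorem trace_second_fourth (x y : V4) :
    ∑ a, ∑ b, ηm a b * eval4 Q x (e4 b) y (e4 a) = 0 := by
  rw [← hQ.2.2.2.2 x y, Finset.sum_comm]
  refine Finset.sum_congr rfl fun b _ => Finset.sum_congr rfl fun a _ => ?_
  rw [hQ.swap_left x, hQ.swap_right _ _ y, neg_neg, ηm_comm]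

theorem rightDual_swap_left (x y z w : V4) :
    eval4 (rightDual Q) x y z w = -eval4 (rightDual Q) y x z w := by
  refine eval4_swap_left (fun a b c d => ?_) x y z w
  simp only [rightDual, hQ.apply_swap_left a b, neg_mul, Finset.sum_neg_distrib, mul_neg]

theorem rightDual_bianchi (x y z w : V4) :
    eval4 (rightDual Q) x y z w + eval4 (rightDual Q) x z w y + eval4 (rightDual Q) x w y z
      = 0 := by
  have expand : ∀ s t u, eval4 (rightDual Q) x s t u =
      ∑ a, ∑ b, ηm a b * (η (e4 a) s * eval4 (rightDual Q) x (e4 b) t u) := fun s t u => by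
    simp only [← mul_assoc]
    rw [Finset.sum_comm]
    simp only [← Finset.sum_mul, sum_ηm_mul_η, sum_mul_eval4_second]
  have trace := hQ.trace_second_fourth x (cross y z w)
  simp only [eval4_cross hQ.apply_swap_right, mul_neg, mul_add, Finset.sum_neg_distrib,
    Finset.sum_add_distrib, ← expand] at trace
  linarith

theorem rightDual_pair_symm (x y z w : V4) :
    eval4 (rightDual Q) x y z w = eval4 (rightDual Q) z w x y :=
  pair_symm_of_bianchi hQ.rightDual_swap_left (eval4_rightDual_swap_right Q)
    hQ.rightDual_bianchi x y z w

/-- The product `η ∧ Q` of double forms, with signs absorbed into cyclic order. -/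
theorem metric_wedge_eq_zero (x y z x' y' z' : V4) :
    η x x' * eval4 Q y z y' z' + η x y' * eval4 Q y z z' x' + η x z' * eval4 Q y z x' y'
    + (η y x' * eval4 Q z x y' z' + η y y' * eval4 Q z x z' x' + η y z' * eval4 Q z x x' y')
    + (η z x' * eval4 Q x y y' z' + η z y' * eval4 Q x y z' x' + η z z' * eval4 Q x y x' y')
      = 0 := by
  simp only [← eval4_rightDual_cross hQ.apply_swap_right]
  set c := cross x' y' z'
  rw [hQ.rightDual_pair_symm y z c x, hQ.rightDual_pair_symm z x c y,
    hQ.rightDual_pair_symm x y c z]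
  linarith [hQ.rightDual_bianchi c x y z]

theorem eval4_spatialProj_first (n x z w : V4) :
    eval4 Q (spatialProj n x) n z w = eval4 Q x n z w := by
  rw [spatialProj, eval4_add_smul_first, hQ.self_left, mul_zero, add_zero]

theorem eval4_spatialProj_third (n x y z : V4) :
    eval4 Q x y (spatialProj n z) n = eval4 Q x y z n := by
  rw [spatialProj, eval4_add_smul_third, hQ.self_right, mul_zero, add_zero]

theorem eval4_add_smul_normal_normal (n u : V4) (a : ℝ) :
    eval4 Q (u + a • n) n (u + a • n) n = eval4 Q u n u n := by
  simp only [eval4_add_smul_first, eval4_add_smul_third, hQ.self_left, hQ.self_right, mul_zero,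
    add_zero]

variable {n : V4} (hn : η n n = -1)
include hn

theorem rightDual_cross_normal (x y z : V4) :
    eval4 (rightDual Q) x n (cross n y z) n =
      -eval4 Q x n (spatialProj n y) (spatialProj n z) := by
  rw [eval4_rightDual_cross hQ.apply_swap_right, hn, hQ.swap_right x n z n,
    hQ.swap_right x n n y]
  simp only [spatialProj, eval4_add_smul_third, eval4_add_smul_fourth, hQ.self_right]
  ring

theorem eval4_eq_electric_of_orthogonal {x y z w : V4} (hx : η n x = 0) (hy : η n y = 0)
    (hz : η n z = 0) (hw : η n w = 0) :
    eval4 Q x y z w = η x z * eval4 Q y n w n - η x w * eval4 Q y n z n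
      - η y z * eval4 Q x n w n + η y w * eval4 Q x n z n := by
  have wedge := hQ.metric_wedge_eq_zero n x y n z w
  simp only [hn, hz, hw, η_comm _ n, hx, hy, hQ.swap_left n x, hQ.swap_right _ n n] at wedge
  linarith

variable {u : V4} (hu : η n u = 0) (a : ℝ)
include hu

theorem eval4_add_smul_normal_spatial (x : V4) :
    eval4 Q (u + a • n) n (u + a • n) (spatialProj n x) =
      eval4 (rightDual Q) u n (cross n x u) n - a * eval4 Q x n u n := by
  rw [hQ.rightDual_cross_normal hn, spatialProj_of_orthogonal hu, eval4_add_smul_first,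
    eval4_add_smul_third, hQ.self_left, hQ.swap_right u n n, hQ.eval4_spatialProj_third,
    hQ.pair_symm u n x n, hQ.swap_right u n u]
  ring

theorem eval4_add_smul_spatial_spatial (x y : V4) :
    eval4 Q (u + a • n) (spatialProj n x) (u + a • n) (spatialProj n y) =
      -(η u y * eval4 Q x n u n + η u x * eval4 Q y n u n)
      + (η x y + η n x * η n y) * eval4 Q u n u n
      - a * (eval4 (rightDual Q) x n (cross n y u) n + eval4 (rightDual Q) y n (cross n x u) n)
      + eval4 Q x n y n * (η u u + a ^ 2) := by
  have spatial_term := hQ.eval4_eq_electric_of_orthogonal hn hu (η_spatialProj hn x) hu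
    (η_spatialProj hn y)
  have normal_term : eval4 Q n (spatialProj n x) n (spatialProj n y) = eval4 Q x n y n := by
    rw [hQ.swap_left, hQ.swap_right, neg_neg, hQ.eval4_spatialProj_first,
      hQ.eval4_spatialProj_third]
  have cross_term (s t : V4) : eval4 Q n (spatialProj n s) u (spatialProj n t) =
      -eval4 (rightDual Q) s n (cross n t u) n := by
    rw [hQ.rightDual_cross_normal hn, spatialProj_of_orthogonal hu, neg_neg, hQ.swap_left,
      hQ.swap_right, neg_neg, hQ.eval4_spatialProj_first]
  rw [η_comm (spatialProj n x) u, η_spatialProj_right hu, η_spatialProj_right hu,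
    η_spatialProj_spatialProj hn, hQ.pair_symm u n (spatialProj n y)] at spatial_term
  simp only [hQ.eval4_spatialProj_first, hQ.eval4_spatialProj_third] at spatial_term
  simp only [eval4_add_smul_first, eval4_add_smul_third, spatial_term, normal_term, cross_term,
    hQ.pair_symm u (spatialProj n x) n]
  ring

end IsWeyl

theorem sum_volv_eq_eval2_cross (S : T2) (x y u w : V4) :
    ∑ κ, ∑ π, ∑ π', ∑ l, volv x y (e4 κ) (e4 π) * ηm π π' * S l π' * w l * u κ =
      eval2 S w (cross x y u) := by
  simp only [eval2, cross, ← sum_volv_third x y u]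
  simp only [Fin.sum_univ_four]
  ring

theorem sum_mul_sum_volv_eq_sum_mul_cross (β : Fin 4 → ℝ) (x y u : V4) :
    ∑ κ, u κ * ∑ π, (∑ π', ηm π π' * β π') * volv x y (e4 κ) (e4 π) =
      ∑ q, β q * cross x y u q := by
  simp only [cross, ← sum_volv_third x y u]
  simp only [Fin.sum_univ_four]
  ring

theorem sum_mul_add_distrib {R ι κ : Type*} [CommRing R] [Fintype ι] [Fintype κ]
    (u p q r : ι → R) (f g : ι → κ → R) (a b h c : R) :
    ∑ i, u i * (-(a * p i + b * q i) + h * r i + c * ∑ j, (f i j + g i j)) =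
      -(a * ∑ i, p i * u i + b * ∑ i, q i * u i) + h * ∑ i, r i * u i
        + c * (∑ i, u i * ∑ j, f i j + ∑ i, u i * ∑ j, g i j) := by
  simp only [Finset.mul_sum (s := (Finset.univ : Finset ι)), ← Finset.sum_neg_distrib,
    ← Finset.sum_add_distrib (s := (Finset.univ : Finset ι))]
  refine Finset.sum_congr rfl fun i _ => ?_
  rw [Finset.sum_add_distrib]
  ring

/-- orthogonal splitting of `T(y,w) = Q(v,y,v,w)` for a Weyl candidate `Q`. -/
theorem stmt_2 (Q : T4) (hQ : IsWeyl Q) (n : V4) (hn : η n n = -1)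
    (v : V4) (A : ℝ) (hA : A = η n v) (vp : V4) (hvp : vp = v + η n v • n)
    (T : V4 → V4 → ℝ) (hT : ∀ y w, T y w = eval4 Q v y v w)
    -- spatial projector
    (P : V4 → V4) (hP : ∀ x, P x = x + η n x • n)
    -- the orthogonal splitting parts of the symmetric bilinear form T
    (rT : ℝ) (hrT : rT = T n n)
    (jT : Fin 4 → ℝ) (hjT : ∀ μ, jT μ = -(T n (P (e4 μ))))
    (tT : T2) (htT : ∀ μ ν, tT μ ν = T (P (e4 μ)) (P (e4 ν)))
    -- electric and magnetic parts of Q, spatial metric, spatial volume form, lowered v⊥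
    (EQ BQ : T2) (hEQ : EQ = Epart Q n) (hBQ : BQ = Bpart Q n)
    (hsp : T2) (hhsp : hsp = fun a b => ηm a b + η n (e4 a) * η n (e4 b))
    (εc : Fin 4 → Fin 4 → Fin 4 → ℝ) (hεc : ∀ a b c, εc a b c = volv n (e4 a) (e4 b) (e4 c))
    (vlow : Fin 4 → ℝ) (hvlow : ∀ ν, vlow ν = ∑ a : Fin 4, ηm ν a * vp a) :
    -- 𝔯(T) = 𝓔(Q)(v⊥,v⊥)
    rT = eval4 Q vp n vp n ∧
    -- 𝔧(T)_μ = −ε_{μκπ} 𝓑(Q)_λ{}^π v⊥^λ v⊥^κ − 𝒜 𝓔(Q)_{μλ} v⊥^λ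
    (∀ μ, jT μ =
      -(∑ κ : Fin 4, ∑ π : Fin 4, ∑ π' : Fin 4, ∑ lam : Fin 4,
          εc μ κ π * ηm π π' * BQ lam π' * vp lam * vp κ)
      - A * (∑ lam : Fin 4, EQ μ lam * vp lam)) ∧
    -- 𝔱(T)_{μν}
    (∀ μ ν, tT μ ν =
      (∑ κ : Fin 4, vp κ *
        (-(vlow ν * EQ μ κ + vlow μ * EQ ν κ)
          + hsp μ ν * (∑ π : Fin 4, EQ κ π * vp π)
          + A * (∑ π : Fin 4,
              ((∑ π' : Fin 4, ηm π π' * BQ μ π') * εc ν κ π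
                + (∑ π' : Fin 4, ηm π π' * BQ ν π') * εc μ κ π))))
      + EQ μ ν * ((∑ κ : Fin 4, vlow κ * vp κ) + A ^ 2)) := by
  obtain rfl : P = spatialProj n := funext hP
  obtain rfl : εc = fun a b c => volv n (e4 a) (e4 b) (e4 c) := by ext; exact hεc _ _ _
  have hvlow : ∀ ν, vlow ν = η vp (e4 ν) := fun ν => by rw [hvlow, sum_ηm_mul]
  have hv : v = vp + (-A) • n := by rw [hvp, hA, neg_smul, add_neg_cancel_right]
  have hvp_orthogonal : η n vp = 0 := hvp ▸ η_spatialProj hn v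
  subst hEQ hBQ
  refine ⟨?_, fun μ => ?_, fun μ ν => ?_⟩
  · rw [hrT, hT, hv, hQ.eval4_add_smul_normal_normal]
  · rw [hjT, hT, hv, hQ.eval4_add_smul_normal_spatial hn hvp_orthogonal, sum_volv_eq_eval2_cross,
      eval2_Bpart, sum_Epart_mul]
    ring
  · rw [htT, hT, hv, hQ.eval4_add_smul_spatial_spatial hn hvp_orthogonal, sum_mul_add_distrib]
    simp only [sum_Epart_mul, sum_Bpart_mul, sum_eval4_mul_first,
      sum_mul_sum_volv_eq_sum_mul_cross, hvlow, sum_η_basis_mul, hhsp, η_basis]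
    unfold Epart
    ring
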